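/- arXiv:2405.09878 — 2 statements merged into one kernel-verified Lean document; each statement's English description precedes it below -/
import Mathlib

section
/- Let f = h_L ∘ … ∘ h_1 be a multi-layer network with a continuous piecewise linear activation φ having |A(φ)| = k+1 linear pieces (k ≥ 1), and set d_ν := min{rank(W_j) : j = 1,…,ν}. Then the number of linear regions of f satisfies |A(f)| ≤ ∏_{ν=1}^{L} F(d_ν, n_ν, k), where F(d,n,k) := (k+1)·Σ_{j=0}^{d−1} C(n−1,j)·k^j + k^d·Σ_{j=d}^{n−1} C(j−1,d−1). -/
noncomputable section

/-- `φ` is affine (linear in the loose sense) on `S`. -/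
def AffineOn (φ : ℝ → ℝ) (S : Set ℝ) : Prop :=
  ∃ m c : ℝ, ∀ x ∈ S, φ x = m * x + c

/-- `φ` is a continuous piecewise linear (PWL) function whose set of linear regions is the
finite collection `A` of pairwise disjoint, nonempty open intervals whose closures cover `ℝ`,
with `φ` affine on each of them and each of them maximal with this property. -/
structure IsPWLWith (φ : ℝ → ℝ) (A : Finset (Set ℝ)) : Prop where
  cont : Continuous φ
  nonempty : ∀ I ∈ A, I.Nonempty
  isOpen : ∀ I ∈ A, IsOpen I
  ordConn : ∀ I ∈ A, I.OrdConnected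
  disjoint : ∀ I ∈ A, ∀ J ∈ A, I ≠ J → I ∩ J = ∅
  covers : (⋃ I ∈ A, closure I) = Set.univ
  affine : ∀ I ∈ A, AffineOn φ I
  maximal : ∀ I ∈ A, ∀ Z : Set ℝ, IsOpen Z → Z.OrdConnected → I ⊆ Z → AffineOn φ Z → Z ⊆ I

/-- Output of the `l`-th layer of the multi-layer network with activation `φ`, layer widths
`nsz`, weight matrices `W` and biases `u` (layer `0` is the input). -/
def layerOut (φ : ℝ → ℝ) (nsz : ℕ → ℕ)
    (W : ∀ j : ℕ, Matrix (Fin (nsz (j + 1))) (Fin (nsz j)) ℝ)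
    (u : ∀ j : ℕ, Fin (nsz (j + 1)) → ℝ) : (l : ℕ) → (Fin (nsz 0) → ℝ) → Fin (nsz l) → ℝ
  | 0 => fun x => x
  | l + 1 => fun x i => φ (((W l).mulVec (layerOut φ nsz W u l x) + u l) i)

/-- The multi-layer network function `f = h_L ∘ … ∘ h_1 : ℝ^d → ℝ^d` (using `nsz 0 = nsz L`). -/
def netFun (φ : ℝ → ℝ) (nsz : ℕ → ℕ)
    (W : ∀ j : ℕ, Matrix (Fin (nsz (j + 1))) (Fin (nsz j)) ℝ)
    (u : ∀ j : ℕ, Fin (nsz (j + 1)) → ℝ) (L : ℕ) (hio : nsz 0 = nsz L)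
    (x : Fin (nsz 0) → ℝ) : Fin (nsz 0) → ℝ :=
  fun i => layerOut φ nsz W u L x (Fin.cast hio i)

/-- A linear region of the `L`-layer network: a nonempty set `C` consisting of exactly the
points whose pre-activations, in every layer and every neuron, lie in one fixed linear region
of `φ` (the same for all points of `C`). -/
def IsLinearRegion (φ : ℝ → ℝ) (Aφ : Finset (Set ℝ)) (L : ℕ) (nsz : ℕ → ℕ)
    (W : ∀ j : ℕ, Matrix (Fin (nsz (j + 1))) (Fin (nsz j)) ℝ)
    (u : ∀ j : ℕ, Fin (nsz (j + 1)) → ℝ) (C : Set (Fin (nsz 0) → ℝ)) : Prop :=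
  C.Nonempty ∧ ∃ I : ∀ l : ℕ, Fin (nsz (l + 1)) → Set ℝ,
    (∀ l, l < L → ∀ i, I l i ∈ Aφ) ∧
    C = {x | ∀ l, l < L → ∀ i, ((W l).mulVec (layerOut φ nsz W u l x) + u l) i ∈ I l i}

/-- The upper-bound quantity
`F(d,n,k) = (k+1)·Σ_{j<d} C(n−1,j)·k^j + k^d·Σ_{j=d}^{n−1} C(j−1,d−1)`
(the number of regions of an arrangement in `Λ_d(n,k)`). -/
def Fbound (d n k : ℕ) : ℕ :=
  (k + 1) * ∑ j ∈ Finset.range d, Nat.choose (n - 1) j * k ^ j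
    + k ^ d * ∑ j ∈ Finset.Icc d (n - 1), Nat.choose (j - 1) (d - 1)

/-!
On a linear region `C` of the first `l` layers the network is affine, so the pre-activations of
layer `l` trace out a subset of an affine space of dimension at most `min {rank W_j : j ≤ l}`.
The next layer therefore splits `C` into at most as many regions as there are cells of an
arrangement of `n` families of `k` parallel hyperplanes in a space of that dimension `d`. Such
cells are counted by adding one family at a time: a cell of the others is convex, so the new
coordinate takes it to an interval, and it is cut into at most one more part than there are
hyperplanes of the new family meeting it. Each of these `k` hyperplanes meets the cells of an
arrangement in dimension `d - 1`, whence Pascal's recursion and the bound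
`∑ j ≤ d, C(n, j) k ^ j`, which is `F(d, n, k)` for `d, n ≥ 1`.
-/

section Breakpoints

variable {α : Type*} {A : Finset (Set α)} {I J : Set α} {x y : α}

theorem forall_lt_of_ordConnected_of_disjoint [LinearOrder α] (hI : I.OrdConnected)
    (hJ : J.OrdConnected) (hIJ : Disjoint I J) (hx : x ∈ I) (hy : y ∈ J) (hxy : x < y) :
    ∀ a ∈ I, ∀ b ∈ J, a < b := by
  intro a ha b hb
  by_contra! hba
  rcases le_total x b with hxb | hbx
  · exact Set.disjoint_left.1 hIJ (hI.out hx ha ⟨hxb, hba⟩) hb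
  · exact Set.disjoint_left.1 hIJ hx (hJ.out hb hy ⟨hbx, hxy.le⟩)

theorem exists_mem_forall_ne_forall_lt [LinearOrder α] (hA : A.Nonempty)
    (hne : ∀ I ∈ A, I.Nonempty) (hoc : ∀ I ∈ A, I.OrdConnected)
    (hdis : (A : Set (Set α)).PairwiseDisjoint id) :
    ∃ M ∈ A, ∀ I ∈ A, I ≠ M → ∀ x ∈ I, ∀ y ∈ M, x < y := by
  obtain ⟨I₀, hI₀⟩ := hA
  have : Nonempty α := (hne I₀ hI₀).to_subtype.map Subtype.val
  choose! point hpoint using hne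
  obtain ⟨M, hM, hmax⟩ := A.exists_max_image point ⟨I₀, hI₀⟩
  refine ⟨M, hM, fun I hI hIM => ?_⟩
  have hdisj : Disjoint I M := hdis hI hM hIM
  have hlt : point I < point M :=
    (hmax I hI).lt_of_ne (hdisj.ne_of_mem (hpoint I hI) (hpoint M hM))
  exact forall_lt_of_ordConnected_of_disjoint (hoc I hI) (hoc M hM) hdisj (hpoint I hI)
    (hpoint M hM) hlt

open Classical in
/-- The points `t i`, `i ∈ s`, are breakpoints of the pieces `A`: an interval containing `m` of
them, counted with multiplicity, meets at most `m + 1` pieces. -/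
def AreBreakpoints [Preorder α] {ι : Type*} (A : Finset (Set α)) (s : Finset ι) (t : ι → α) :
    Prop :=
  ∀ J : Set α, J.OrdConnected →
    (A.filter fun I => (I ∩ J).Nonempty).card ≤ (s.filter fun i => t i ∈ J).card + 1

open Classical in
theorem exists_areBreakpoints_erase_sSup [ConditionallyCompleteLinearOrder α] (hA : A.Nonempty)
    (hne : ∀ I ∈ A, I.Nonempty) (hoc : ∀ I ∈ A, I.OrdConnected)
    (hdis : (A : Set (Set α)).PairwiseDisjoint id) :
    ∃ M ∈ A, AreBreakpoints A (A.erase M) sSup := by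
  obtain ⟨M, hM, hltM⟩ := exists_mem_forall_ne_forall_lt hA hne hoc hdis
  refine ⟨M, hM, fun J hJ => ?_⟩
  set B := A.filter fun I => (I ∩ J).Nonempty
  have hBA : B ⊆ A := A.filter_subset _
  rcases B.eq_empty_or_nonempty with hB | hB
  · simp [hB]
  obtain ⟨N, hN, hltN⟩ := exists_mem_forall_ne_forall_lt hB (fun I hI => hne I (hBA hI))
    (fun I hI => hoc I (hBA hI)) (hdis.subset hBA)
  obtain ⟨y, hyN, hyJ⟩ := (Finset.mem_filter.1 hN).2
  rw [← Finset.card_erase_add_one hN]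
  gcongr
  intro I hI
  obtain ⟨hIN, hIB⟩ := Finset.mem_erase.1 hI
  obtain ⟨x, hxI, hxJ⟩ := (Finset.mem_filter.1 hIB).2
  have hlt : ∀ z ∈ I, z < y := fun z hz => hltN I hIB hIN z hz y hyN
  have hIM : I ≠ M := by
    rintro rfl
    exact lt_asymm (hlt x hxI) (hltM N (hBA hN) hIN.symm y hyN x hxI)
  have hxsup : x ≤ sSup I := le_csSup ⟨y, fun z hz => (hlt z hz).le⟩ hxI
  have hsupy : sSup I ≤ y := csSup_le ⟨x, hxI⟩ fun z hz => (hlt z hz).le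
  exact Finset.mem_filter.2
    ⟨Finset.mem_erase.2 ⟨hIM, hBA hIB⟩, hJ.out hxJ hyJ ⟨hxsup, hsupy⟩⟩

end Breakpoints

section ArrangementBound

/-- The number of cells that `n` families of `k` parallel hyperplanes in general position cut
out of a `d`-dimensional space. -/
def arrangementBound (d n k : ℕ) : ℕ :=
  ∑ j ∈ Finset.range (d + 1), n.choose j * k ^ j

variable (d n k : ℕ)

theorem arrangementBound_zero_left : arrangementBound 0 n k = 1 := by
  simp [arrangementBound]

theorem arrangementBound_zero_right : arrangementBound d 0 k = 1 := by
  simp [arrangementBound, Finset.sum_range_succ']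

theorem arrangementBound_succ_succ :
    arrangementBound (d + 1) (n + 1) k =
      arrangementBound (d + 1) n k + k * arrangementBound d n k := by
  have pascal (j : ℕ) : (n + 1).choose (j + 1) * k ^ (j + 1) =
      n.choose (j + 1) * k ^ (j + 1) + k * (n.choose j * k ^ j) := by
    rw [Nat.choose_succ_succ]
    ring
  simp only [arrangementBound]
  rw [Finset.sum_range_succ', Finset.sum_range_succ' _ (d + 1), Finset.mul_sum,
    Finset.sum_congr rfl fun j _ => pascal j, Finset.sum_add_distrib]
  simp only [Nat.choose_zero_right]
  ring

theorem arrangementBound_le_succ_right :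
    arrangementBound d n k ≤ arrangementBound d (n + 1) k := by
  unfold arrangementBound
  gcongr
  exact n.le_succ

theorem sum_Icc_succ_choose_pred (m : ℕ) :
    ∑ j ∈ Finset.Icc (d + 1) m, (j - 1).choose d = m.choose (d + 1) := by
  cases m with
  | zero => simp
  | succ m =>
    rw [← Finset.map_add_right_Icc d m 1, Finset.sum_map, ← Nat.sum_Icc_choose]
    rfl

-- Equality for `d, n ≥ 1`; at `0` the truncated subtractions in `Fbound` only increase it.
theorem arrangementBound_le_Fbound : arrangementBound d n k ≤ Fbound d n k := by
  rcases d with _ | d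
  · rw [arrangementBound_zero_left]
    simp [Fbound]
  rcases n with _ | n
  · rw [arrangementBound_zero_right]
    simp [Fbound, Finset.sum_range_succ']
  refine le_of_eq ?_
  rw [arrangementBound_succ_succ, Fbound, Nat.add_sub_cancel, Nat.add_sub_cancel,
    sum_Icc_succ_choose_pred]
  unfold arrangementBound
  rw [Finset.sum_range_succ _ (d + 1)]
  ring

end ArrangementBound

section LevelSection

open Module

variable {𝕜 V F : Type*} [DivisionRing 𝕜] [AddCommGroup V] [Module 𝕜 V] [AddCommGroup F]
  [Module 𝕜 F]

/-- The part `{x ∈ E | g x = t}` of `E`, as an affine subspace: a hyperplane section when `g` is a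
functional that is not constant on `E`. -/
def levelSection (E : AffineSubspace 𝕜 V) (g : V →ᵃ[𝕜] F) (t : F) : AffineSubspace 𝕜 V :=
  E ⊓ (affineSpan 𝕜 {t}).comap g

variable {E : AffineSubspace 𝕜 V} {g : V →ᵃ[𝕜] F} {x y : V}

theorem mem_levelSection {t : F} : x ∈ levelSection E g t ↔ x ∈ E ∧ g x = t := by
  simp [levelSection, AffineSubspace.mem_inf_iff]

theorem finrank_direction_levelSection_lt [FiniteDimensional 𝕜 V] (hx : x ∈ E) (hy : y ∈ E)
    (hxy : g x ≠ g y) (t : F) :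
    finrank 𝕜 (levelSection E g t).direction < finrank 𝕜 E.direction := by
  have hker : (levelSection E g t).direction ≤ LinearMap.ker g.linear := by
    rw [AffineSubspace.direction_eq_vectorSpan, vectorSpan_def, Submodule.span_le]
    rintro _ ⟨a, ha, b, hb, rfl⟩
    rw [SetLike.mem_coe, LinearMap.mem_ker, AffineMap.linearMap_vsub,
      (mem_levelSection.1 ha).2, (mem_levelSection.1 hb).2, vsub_self]
  have hnotker : x -ᵥ y ∉ LinearMap.ker g.linear := by
    rwa [LinearMap.mem_ker, AffineMap.linearMap_vsub, vsub_eq_zero_iff_eq]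
  exact Submodule.finrank_lt_finrank_of_lt <| SetLike.lt_iff_le_and_exists.2
    ⟨AffineSubspace.direction_le inf_le_left, x -ᵥ y,
      AffineSubspace.vsub_mem_direction hx hy, fun h => hnotker (hker h)⟩

end LevelSection

section Patterns

open Module

variable {V : Type*} [AddCommGroup V] [Module ℝ V]

/-- The points of `E` at which each functional `f i` lies in the piece `p i`. -/
def cell {ι : Type*} (f : ι → V →ᵃ[ℝ] ℝ) (E : AffineSubspace ℝ V) (p : ι → Set ℝ) : Set V :=
  {x | x ∈ E ∧ ∀ i, f i x ∈ p i}

theorem ordConnected_image_cell {ι : Type*} (g : V →ᵃ[ℝ] ℝ) (f : ι → V →ᵃ[ℝ] ℝ)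
    (E : AffineSubspace ℝ V) {p : ι → Set ℝ} (hp : ∀ i, (p i).OrdConnected) :
    (g '' cell f E p).OrdConnected := by
  have hcell : cell f E p = (E : Set V) ∩ ⋂ i, f i ⁻¹' p i := by
    ext x
    simp [cell]
  rw [hcell]
  exact ((E.convex.inter
    (convex_iInter fun i => (hp i).convex.affine_preimage (f i))).affine_image g).ordConnected

variable (A : Finset (Set ℝ)) {n : ℕ}

open Classical in
/-- The choices of a piece in `A` for each functional whose cell in `E` is nonempty. -/
def realizedPatterns (f : Fin n → V →ᵃ[ℝ] ℝ) (E : AffineSubspace ℝ V) :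
    Finset (Fin n → Set ℝ) :=
  (Fintype.piFinset fun _ => A).filter fun p => (cell f E p).Nonempty

variable {A} {E : AffineSubspace ℝ V}

theorem mem_realizedPatterns {f : Fin n → V →ᵃ[ℝ] ℝ} {p : Fin n → Set ℝ} :
    p ∈ realizedPatterns A f E ↔ (∀ i, p i ∈ A) ∧ (cell f E p).Nonempty := by
  simp [realizedPatterns]

open Classical in
theorem card_realizedPatterns_succ_le (f : Fin (n + 1) → V →ᵃ[ℝ] ℝ) :
    (realizedPatterns A f E).card ≤
      ∑ q ∈ realizedPatterns A (Fin.tail f) E,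
        (A.filter fun I => (I ∩ f 0 '' cell (Fin.tail f) E q).Nonempty).card := by
  let tail (p : Fin (n + 1) → Set ℝ) : Fin n → Set ℝ := Fin.tail p
  have htail : ∀ p ∈ realizedPatterns A f E, tail p ∈ realizedPatterns A (Fin.tail f) E := by
    intro p hp
    obtain ⟨hpA, x, hxE, hx⟩ := mem_realizedPatterns.1 hp
    exact mem_realizedPatterns.2 ⟨fun i => hpA i.succ, x, hxE, fun i => hx i.succ⟩
  rw [Finset.card_eq_sum_card_fiberwise htail]
  refine Finset.sum_le_sum fun q _ => Finset.card_le_card_of_injOn (fun p => p 0) ?_ ?_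
  · intro p hp
    obtain ⟨hpf, rfl⟩ := Finset.mem_filter.1 hp
    obtain ⟨hpA, x, hxE, hx⟩ := mem_realizedPatterns.1 hpf
    exact Finset.mem_filter.2 ⟨hpA 0, f 0 x, hx 0, x, ⟨hxE, fun i => hx i.succ⟩, rfl⟩
  · intro p hp p' hp' h0
    have hpp' : tail p = tail p' :=
      (Finset.mem_filter.1 hp).2.trans (Finset.mem_filter.1 hp').2.symm
    exact funext (Fin.cases h0 (congrFun hpp'))

theorem card_realizedPatterns_succ_le_of_const (hdis : (A : Set (Set ℝ)).PairwiseDisjoint id)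
    {f : Fin (n + 1) → V →ᵃ[ℝ] ℝ} (hf : ∀ x ∈ E, ∀ y ∈ E, f 0 x = f 0 y) :
    (realizedPatterns A f E).card ≤ (realizedPatterns A (Fin.tail f) E).card := by
  classical
  refine (card_realizedPatterns_succ_le f).trans ?_
  rw [Finset.card_eq_sum_ones]
  refine Finset.sum_le_sum fun q _ => Finset.card_le_one.2 fun I hI I' hI' => ?_
  obtain ⟨hIA, _, hxI, x, hx, rfl⟩ := Finset.mem_filter.1 hI
  obtain ⟨hIA', _, hyI', y, hy, rfl⟩ := Finset.mem_filter.1 hI'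
  rw [← hf x hx.1 y hy.1] at hyI'
  exact hdis.elim_set hIA hIA' (f 0 x) hxI hyI'

theorem card_realizedPatterns_succ_le_add_sum_levelSection {ι : Type*} {s : Finset ι} {t : ι → ℝ}
    (hst : AreBreakpoints A s t) (hoc : ∀ I ∈ A, I.OrdConnected)
    (f : Fin (n + 1) → V →ᵃ[ℝ] ℝ) :
    (realizedPatterns A f E).card ≤
      (realizedPatterns A (Fin.tail f) E).card +
        ∑ i ∈ s, (realizedPatterns A (Fin.tail f) (levelSection E (f 0) (t i))).card := by
  classical
  let meets (q : Fin n → Set ℝ) (i : ι) : Prop := t i ∈ f 0 '' cell (Fin.tail f) E q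
  have hsection (i : ι) : (realizedPatterns A (Fin.tail f) E).filter (meets · i) ⊆
      realizedPatterns A (Fin.tail f) (levelSection E (f 0) (t i)) := by
    intro q hq
    obtain ⟨hq, x, hx, hxt⟩ := Finset.mem_filter.1 hq
    exact mem_realizedPatterns.2
      ⟨(mem_realizedPatterns.1 hq).1, x, mem_levelSection.2 ⟨hx.1, hxt⟩, hx.2⟩
  calc
    _ ≤ ∑ q ∈ realizedPatterns A (Fin.tail f) E,
          (A.filter fun I => (I ∩ f 0 '' cell (Fin.tail f) E q).Nonempty).card :=
      card_realizedPatterns_succ_le f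
    _ ≤ ∑ q ∈ realizedPatterns A (Fin.tail f) E, ((s.filter (meets q)).card + 1) :=
      Finset.sum_le_sum fun q hq => hst _ <| ordConnected_image_cell _ _ _ fun i =>
        hoc _ ((mem_realizedPatterns.1 hq).1 i)
    _ = (realizedPatterns A (Fin.tail f) E).card +
          ∑ i ∈ s, ((realizedPatterns A (Fin.tail f) E).filter (meets · i)).card := by
      rw [Finset.sum_add_distrib, ← Finset.card_eq_sum_ones, add_comm]
      congr 1
      exact Finset.sum_card_bipartiteAbove_eq_sum_card_bipartiteBelow meets
    _ ≤ _ := by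
      gcongr with i
      exact hsection i

theorem card_realizedPatterns_le [FiniteDimensional ℝ V] {ι : Type*} {s : Finset ι} {t : ι → ℝ}
    (hst : AreBreakpoints A s t) (hoc : ∀ I ∈ A, I.OrdConnected)
    (hdis : (A : Set (Set ℝ)).PairwiseDisjoint id) {d : ℕ} (hd : finrank ℝ E.direction ≤ d)
    (f : Fin n → V →ᵃ[ℝ] ℝ) :
    (realizedPatterns A f E).card ≤ arrangementBound d n s.card := by
  induction n generalizing d E with
  | zero =>
    rw [arrangementBound_zero_right]
    exact Finset.card_le_one_of_subsingleton _
  | succ n ih =>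
    by_cases hconst : ∀ x ∈ E, ∀ y ∈ E, f 0 x = f 0 y
    · calc
        _ ≤ (realizedPatterns A (Fin.tail f) E).card :=
          card_realizedPatterns_succ_le_of_const hdis hconst
        _ ≤ arrangementBound d n s.card := ih hd _
        _ ≤ _ := arrangementBound_le_succ_right d n s.card
    · push Not at hconst
      obtain ⟨x, hx, y, hy, hxy⟩ := hconst
      have hlt (c : ℝ) : finrank ℝ (levelSection E (f 0) c).direction < d :=
        (finrank_direction_levelSection_lt hx hy hxy c).trans_le hd
      obtain ⟨d, rfl⟩ := Nat.exists_eq_succ_of_ne_zero (Nat.ne_zero_of_lt (hlt 0))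
      calc
        _ ≤ (realizedPatterns A (Fin.tail f) E).card +
              ∑ i ∈ s, (realizedPatterns A (Fin.tail f) (levelSection E (f 0) (t i))).card :=
          card_realizedPatterns_succ_le_add_sum_levelSection hst hoc f
        _ ≤ arrangementBound (d + 1) n s.card + ∑ _i ∈ s, arrangementBound d n s.card :=
          add_le_add (ih hd _)
            (Finset.sum_le_sum fun i _ => ih (Nat.lt_succ_iff.1 (hlt (t i))) _)
        _ = _ := by
          rw [Finset.sum_const, smul_eq_mul, arrangementBound_succ_succ]

end Patterns

section Refinements

open Module

variable {X : Type*} {n : ℕ}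

/-- The nonempty parts into which `C` is split by the pieces `A` of the coordinates of `g`. -/
def refinements (A : Finset (Set ℝ)) (g : X → Fin n → ℝ) (C : Set X) : Set (Set X) :=
  {D | D.Nonempty ∧ ∃ p : Fin n → Set ℝ, (∀ i, p i ∈ A) ∧ D = {x ∈ C | ∀ i, g x i ∈ p i}}

theorem encard_refinements_le [AddCommGroup X] [Module ℝ X] {A : Finset (Set ℝ)}
    (hne : ∀ I ∈ A, I.Nonempty) (hoc : ∀ I ∈ A, I.OrdConnected)
    (hdis : (A : Set (Set ℝ)).PairwiseDisjoint id) {k : ℕ} (hcard : A.card = k + 1)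
    {g : X → Fin n → ℝ} {h : X →ᵃ[ℝ] (Fin n → ℝ)} {C : Set X} (hgh : Set.EqOn g h C) {d : ℕ}
    (hd : finrank ℝ (LinearMap.range h.linear) ≤ d) :
    (refinements A g C).encard ≤ arrangementBound d n k := by
  classical
  obtain ⟨M, hM, hbreak⟩ := exists_areBreakpoints_erase_sSup
    (Finset.card_pos.1 (hcard ▸ k.succ_pos)) hne hoc hdis
  let E : AffineSubspace ℝ (Fin n → ℝ) := (⊤ : AffineSubspace ℝ X).map h
  let coord (i : Fin n) : (Fin n → ℝ) →ᵃ[ℝ] ℝ := AffineMap.proj i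
  have hE : finrank ℝ E.direction ≤ d := by
    rwa [AffineSubspace.map_direction, AffineSubspace.direction_top, Submodule.map_top]
  have hsub : refinements A g C ⊆
      (fun p : Fin n → Set ℝ => {x ∈ C | ∀ i, g x i ∈ p i}) '' realizedPatterns A coord E := by
    rintro _ ⟨hD, p, hp, rfl⟩
    obtain ⟨x, hxC, hx⟩ := hD
    refine ⟨p, mem_realizedPatterns.2 ⟨hp, h x, ⟨x, trivial, rfl⟩, fun i => ?_⟩, rfl⟩
    rw [← hgh hxC]
    exact hx i
  calc
    _ ≤ (realizedPatterns A coord E : Set (Fin n → Set ℝ)).encard :=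
      (Set.encard_le_encard hsub).trans (Set.encard_image_le _ _)
    _ ≤ arrangementBound d n k := by
      rw [Set.encard_coe_eq_coe_finsetCard]
      have := card_realizedPatterns_le hbreak hoc hdis hE coord
      rw [Finset.card_erase_of_mem hM, hcard, Nat.add_sub_cancel] at this
      exact_mod_cast this

theorem encard_biUnion_le_mul {β : Type*} {S : Set X} (hS : S.Finite) {t : X → Set β} {c : ℕ∞}
    (ht : ∀ a ∈ S, (t a).encard ≤ c) : (⋃ a ∈ S, t a).encard ≤ S.encard * c := by
  lift S to Finset X using hS
  calc
    _ ≤ ∑ a ∈ S, (t a).encard := S.set_encard_biUnion_le t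
    _ ≤ S.card • c := Finset.sum_le_card_nsmul _ _ _ ht
    _ = _ := by rw [nsmul_eq_mul, Set.encard_coe_eq_coe_finsetCard]

end Refinements

section Layers

open Module

section AffineLayer

variable {R ι κ : Type*} [CommRing R] [Fintype κ]

/-- A layer before its activation, `y ↦ W y + u`. -/
def affineLayer (W : Matrix ι κ R) (u : ι → R) : (κ → R) →ᵃ[R] (ι → R) :=
  W.mulVecLin.toAffineMap + AffineMap.const R _ u

theorem affineLayer_linear (W : Matrix ι κ R) (u : ι → R) :
    (affineLayer W u).linear = W.mulVecLin := by
  simp [affineLayer]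

theorem exists_affineMap_forall_comp_eq {ι : Type*} {φ : ℝ → ℝ} {p : ι → Set ℝ}
    (hp : ∀ i, AffineOn φ (p i)) :
    ∃ T : (ι → ℝ) →ᵃ[ℝ] (ι → ℝ), ∀ y, (∀ i, y i ∈ p i) → φ ∘ y = T y := by
  choose m c hmc using hp
  refine ⟨AffineMap.pi fun i => m i • AffineMap.proj i + AffineMap.const ℝ _ (c i), ?_⟩
  intro y hy
  ext i
  simpa using hmc i (y i) (hy i)

theorem finrank_range_linear_comp_le_right {𝕜 V₁ V₂ V₃ : Type*} [DivisionRing 𝕜]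
    [AddCommGroup V₁] [Module 𝕜 V₁] [AddCommGroup V₂] [Module 𝕜 V₂] [FiniteDimensional 𝕜 V₂]
    [AddCommGroup V₃] [Module 𝕜 V₃] (T : V₂ →ᵃ[𝕜] V₃) (h : V₁ →ᵃ[𝕜] V₂) :
    finrank 𝕜 (LinearMap.range (T.comp h).linear) ≤ finrank 𝕜 (LinearMap.range h.linear) := by
  rw [AffineMap.comp_linear, LinearMap.range_comp]
  exact Submodule.finrank_map_le _ _

end AffineLayer

variable {φ : ℝ → ℝ} {A : Finset (Set ℝ)} {nsz : ℕ → ℕ}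
  {W : ∀ j : ℕ, Matrix (Fin (nsz (j + 1))) (Fin (nsz j)) ℝ} {u : ∀ j : ℕ, Fin (nsz (j + 1)) → ℝ}
  {l : ℕ} {C D : Set (Fin (nsz 0) → ℝ)}

variable (φ nsz W u) in
/-- The argument of the activation in the layer that follows layer `l`, as a function of the
input. -/
def preactivation (l : ℕ) (x : Fin (nsz 0) → ℝ) : Fin (nsz (l + 1)) → ℝ :=
  affineLayer (W l) (u l) (layerOut φ nsz W u l x)

theorem IsLinearRegion.exists_mem_refinements (hD : IsLinearRegion φ A (l + 1) nsz W u D) :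
    ∃ C, IsLinearRegion φ A l nsz W u C ∧ D ∈ refinements A (preactivation φ nsz W u l) C := by
  obtain ⟨hne, I, hI, rfl⟩ := hD
  obtain ⟨hI', hIl⟩ := Nat.forall_lt_succ_right.1 hI
  refine ⟨_, ⟨hne.mono fun x hx => (Nat.forall_lt_succ_right.1 hx).1, I, hI', rfl⟩,
    hne, I l, hIl, ?_⟩
  ext x
  exact Nat.forall_lt_succ_right

theorem exists_affineMap_preactivation
    {g : (Fin (nsz 0) → ℝ) →ᵃ[ℝ] (Fin (nsz l) → ℝ)} (hg : Set.EqOn (layerOut φ nsz W u l) g C)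
    (hrank : ∀ j < l, finrank ℝ (LinearMap.range g.linear) ≤ (W j).rank) :
    ∃ h : (Fin (nsz 0) → ℝ) →ᵃ[ℝ] (Fin (nsz (l + 1)) → ℝ),
      Set.EqOn (preactivation φ nsz W u l) h C ∧
        ∀ j < l + 1, finrank ℝ (LinearMap.range h.linear) ≤ (W j).rank := by
  refine ⟨(affineLayer (W l) (u l)).comp g, fun x hx => congrArg _ (hg hx),
    Nat.forall_lt_succ_right.2 ⟨fun j hj => ?_, ?_⟩⟩
  · exact (finrank_range_linear_comp_le_right _ g).trans (hrank j hj)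
  · rw [AffineMap.comp_linear, affineLayer_linear, Matrix.rank]
    exact Submodule.finrank_mono (LinearMap.range_comp_le_range _ _)

theorem IsLinearRegion.exists_affineMap_layerOut (haff : ∀ I ∈ A, AffineOn φ I)
    (hC : IsLinearRegion φ A l nsz W u C) :
    ∃ g : (Fin (nsz 0) → ℝ) →ᵃ[ℝ] (Fin (nsz l) → ℝ), Set.EqOn (layerOut φ nsz W u l) g C ∧
      ∀ j < l, finrank ℝ (LinearMap.range g.linear) ≤ (W j).rank := by
  induction l generalizing C with
  | zero => exact ⟨AffineMap.id ℝ _, fun _ _ => rfl, by simp⟩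
  | succ l ih =>
    obtain ⟨C', hC', -, p, hp, rfl⟩ := hC.exists_mem_refinements
    obtain ⟨g, hg, hgrank⟩ := ih hC'
    obtain ⟨h, hh, hrank⟩ := exists_affineMap_preactivation hg hgrank
    obtain ⟨T, hT⟩ := exists_affineMap_forall_comp_eq fun i => haff (p i) (hp i)
    refine ⟨T.comp h, fun x hx => ?_, fun j hj =>
      (finrank_range_linear_comp_le_right T h).trans (hrank j hj)⟩
    calc
      layerOut φ nsz W u (l + 1) x = φ ∘ preactivation φ nsz W u l x := rfl
      _ = T (preactivation φ nsz W u l x) := hT _ hx.2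
      _ = T (h x) := congrArg T (hh hx.1)

end Layers

theorem card_linearRegions_le_general
    {φ : ℝ → ℝ} {A : Finset (Set ℝ)} {k : ℕ} (hne : ∀ I ∈ A, I.Nonempty)
    (hoc : ∀ I ∈ A, I.OrdConnected) (hdis : (A : Set (Set ℝ)).PairwiseDisjoint id)
    (haff : ∀ I ∈ A, AffineOn φ I) (hcard : A.card = k + 1) (L : ℕ) (nsz : ℕ → ℕ)
    (W : ∀ j : ℕ, Matrix (Fin (nsz (j + 1))) (Fin (nsz j)) ℝ)
    (u : ∀ j : ℕ, Fin (nsz (j + 1)) → ℝ) :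
    {C | IsLinearRegion φ A L nsz W u C}.encard ≤
      (∏ ν ∈ Finset.range L,
        Fbound (Finset.inf' (Finset.range (ν + 1)) Finset.nonempty_range_add_one
          fun j => (W j).rank) (nsz (ν + 1)) k : ℕ) := by
  induction L with
  | zero =>
    have : {C | IsLinearRegion φ A 0 nsz W u C} ⊆ {Set.univ} := by
      rintro C ⟨-, I, -, rfl⟩
      simp
    simpa using Set.encard_le_encard this
  | succ l ih =>
    set d := Finset.inf' (Finset.range (l + 1)) Finset.nonempty_range_add_one fun j => (W j).rank
    have hsplit : ∀ C ∈ {C | IsLinearRegion φ A l nsz W u C},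
        (refinements A (preactivation φ nsz W u l) C).encard ≤ Fbound d (nsz (l + 1)) k := by
      intro C hC
      obtain ⟨g, hg, hgrank⟩ := hC.exists_affineMap_layerOut haff
      obtain ⟨h, hh, hrank⟩ := exists_affineMap_preactivation hg hgrank
      have hd : Module.finrank ℝ (LinearMap.range h.linear) ≤ d :=
        Finset.le_inf' _ _ fun j hj => hrank j (Finset.mem_range.1 hj)
      exact (encard_refinements_le hne hoc hdis hcard hh hd).trans
        (by exact_mod_cast arrangementBound_le_Fbound d _ k)
    calc
      _ ≤ (⋃ C ∈ {C | IsLinearRegion φ A l nsz W u C},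
            refinements A (preactivation φ nsz W u l) C).encard :=
        Set.encard_le_encard fun D hD => Set.mem_iUnion₂.2 <| by
          obtain ⟨C, hC, hDC⟩ := IsLinearRegion.exists_mem_refinements hD
          exact ⟨C, hC, hDC⟩
      _ ≤ {C | IsLinearRegion φ A l nsz W u C}.encard * Fbound d (nsz (l + 1)) k :=
        encard_biUnion_le_mul (Set.finite_of_encard_le_coe ih) hsplit
      _ ≤ _ := by
        rw [Finset.prod_range_succ, Nat.cast_mul]
        gcongr

/-- The number of linear regions of a multi-layer network with a PWL
activation with `k+1` pieces is at most `∏_{ν=1}^{L} F(d_ν, n_ν, k)`, where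
`d_ν = min{rank W_j : j ≤ ν}`. -/
theorem card_linearRegions_le
    (φ : ℝ → ℝ) (Aφ : Finset (Set ℝ)) (k : ℕ) (hk : 1 ≤ k)
    (hφ : IsPWLWith φ Aφ) (hcard : Aφ.card = k + 1)
    (L : ℕ) (hL : 1 ≤ L) (nsz : ℕ → ℕ)
    (W : ∀ j : ℕ, Matrix (Fin (nsz (j + 1))) (Fin (nsz j)) ℝ)
    (u : ∀ j : ℕ, Fin (nsz (j + 1)) → ℝ) :
    {C : Set (Fin (nsz 0) → ℝ) | IsLinearRegion φ Aφ L nsz W u C}.ncard ≤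
      ∏ ν ∈ Finset.range L,
        Fbound (Finset.inf' (Finset.range (ν + 1)) Finset.nonempty_range_add_one
          fun j => (W j).rank) (nsz (ν + 1)) k := by
  exact ENat.toNat_le_of_le_natCast <| card_linearRegions_le_general hφ.nonempty hφ.ordConn
    (fun I hI J hJ hIJ => Set.disjoint_iff_inter_eq_empty.2 (hφ.disjoint I hI J hJ hIJ))
    hφ.affine hcard L nsz W u

end
end

section
/- Let f = h_L ∘ … ∘ h_1 be a multi-layer network with a continuous piecewise linear activation φ having |A(φ)| = k+1 linear pieces (k ≥ 1), and set d_ν := min{rank(W_j) : j = 1,…,ν}. Then the set Fix(f) of fixed points of f has at most ∏_{ν=1}^{L} F(d_ν, n_ν, k) connected components, where F(d,n,k) := (k+1)·Σ_{j=0}^{d−1} C(n−1,j)·k^j + k^d·Σ_{j=d}^{n−1} C(j−1,d−1). -/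
noncomputable section

/-!
On the cells cut out by finitely many breakpoints, `φ` is affine. If a network prefix is affine on a
convex piece `C`, then the preactivations of the next layer range over an affine subspace of
dimension at most `d_ν` as `x` varies in `C`; its coordinate functions cut it, by
deletion–restriction, into at most `F(d_ν, n_ν, k)` cells of `n_ν` families of `k` parallel
hyperplanes, and each cell yields one convex piece on which the longer prefix is affine. Finally,
the fixed points of an affine map in a convex set form a convex, hence connected, set, so every
piece of the whole network meets at most one component of `Fix(f)`.
-/

open Module Set

section Counting

/-- The partial binomial sum `∑ j ≤ d, C(n, j) k ^ j`: the maximal number of regions into which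
`n` families of `k` parallel hyperplanes cut a `d`-dimensional space. -/
def regionBound (n d k : ℕ) : ℕ :=
  ∑ j ∈ Finset.range (d + 1), n.choose j * k ^ j

lemma regionBound_succ_succ (n d k : ℕ) :
    regionBound (n + 1) (d + 1) k = regionBound n (d + 1) k + k * regionBound n d k := by
  have pascal (j : ℕ) : (n + 1).choose (j + 1) * k ^ (j + 1) =
      n.choose (j + 1) * k ^ (j + 1) + k * (n.choose j * k ^ j) := by
    rw [Nat.choose_succ_succ]
    ring
  simp only [regionBound, Finset.sum_range_succ' _ (d + 1), pascal, Finset.sum_add_distrib,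
    Finset.mul_sum, Nat.choose_zero_right]
  ring

lemma regionBound_mono_left (d k : ℕ) : Monotone (regionBound · d k) := fun _ _ h =>
  Finset.sum_le_sum fun j _ => Nat.mul_le_mul_right _ (Nat.choose_le_choose j h)

lemma regionBound_mono_right (n k : ℕ) : Monotone (regionBound n · k) := fun _ _ h =>
  Finset.sum_le_sum_of_subset (Finset.range_subset_range.2 (Nat.succ_le_succ h))

lemma regionBound_zero_left (d k : ℕ) : regionBound 0 d k = 1 := by
  simp [regionBound, Finset.sum_range_succ']

lemma regionBound_zero_right (n k : ℕ) : regionBound n 0 k = 1 := by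
  simp [regionBound]

lemma sum_Icc_choose_pred (e m : ℕ) :
    ∑ j ∈ Finset.Icc (e + 1) m, (j - 1).choose e = m.choose (e + 1) := by
  cases m with
  | zero => simp
  | succ m => rw [← Nat.sum_Icc_choose, ← Finset.map_add_right_Icc, Finset.sum_map]; simp

lemma Fbound_succ_succ (d n k : ℕ) : Fbound (d + 1) (n + 1) k = regionBound (n + 1) (d + 1) k := by
  rw [regionBound_succ_succ, Fbound]
  simp only [Nat.add_sub_cancel, sum_Icc_choose_pred]
  rw [regionBound, regionBound, Finset.sum_range_succ _ (d + 1)]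
  ring

lemma regionBound_le_Fbound (n d k : ℕ) : regionBound n d k ≤ Fbound d n k := by
  cases d with
  | zero =>
    simp [regionBound_zero_right, Fbound]
  | succ d =>
    cases n with
    | zero => simp [regionBound_zero_left, Fbound, Finset.sum_range_succ']
    | succ n => exact (Fbound_succ_succ d n k).ge

end Counting

section Cells

variable {α : Type*} [LinearOrder α]

/-- The index of the cell of `t` in the partition of the line at the points of `T`: the number of
points of `T` strictly below `t`. Hence the cells are the half-open intervals `(s, s']` between
consecutive points of `T` together with two rays. -/
def cellIndex (T : Finset α) (t : α) : ℕ :=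
  (T.filter (· < t)).card

lemma cellIndex_mono (T : Finset α) : Monotone (cellIndex T) := fun _ _ h =>
  Finset.card_le_card (Finset.monotone_filter_right T fun _ _ hs => hs.trans_le h)

lemma ordConnected_preimage_cellIndex (T : Finset α) (m : ℕ) :
    (cellIndex T ⁻¹' {m}).OrdConnected :=
  ordConnected_singleton.preimage_mono (cellIndex_mono T)

lemma cellIndex_lt_of_mem_Ico {T : Finset α} {a b t : α} (ht : t ∈ T) (hab : t ∈ Ico a b) :
    cellIndex T a < cellIndex T b := by
  refine (cellIndex_mono T hab.1).trans_lt (Finset.card_lt_card ?_)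
  refine (Finset.ssubset_iff_of_subset ?_).2 ⟨t, by simp [ht, hab.2], by simp⟩
  exact Finset.monotone_filter_right T fun s _ hs => hs.trans hab.2

lemma exists_mem_Ico_of_cellIndex_lt {T : Finset α} {a b : α} (h : cellIndex T a < cellIndex T b) :
    ∃ t ∈ T, t ∈ Ico a b ∧ cellIndex T b = cellIndex T t + 1 := by
  have hne : (T.filter (· < b)).Nonempty := Finset.card_pos.1 (Nat.zero_lt_of_lt h)
  obtain ⟨t, ht, hmax⟩ := Finset.exists_max_image _ id hne
  simp only [Finset.mem_filter, id_eq] at ht hmax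
  refine ⟨t, ht.1, ⟨?_, ht.2⟩, ?_⟩
  · by_contra! hta
    refine h.not_ge (Finset.card_le_card fun s hs => ?_)
    rw [Finset.mem_filter] at hs ⊢
    exact ⟨hs.1, (hmax s hs).trans_lt hta⟩
  · have hinsert : T.filter (· < b) = insert t (T.filter (· < t)) := by
      ext s
      simp only [Finset.mem_filter, Finset.mem_insert]
      constructor
      · exact fun hs => (hmax s hs).eq_or_lt.imp_right fun hst => ⟨hs.1, hst⟩
      · rintro (rfl | hs)
        exacts [ht, ⟨hs.1, hs.2.trans ht.2⟩]
    rw [cellIndex, hinsert, Finset.card_insert_of_notMem (by simp), cellIndex]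

end Cells

section Arrangement

lemma encard_biUnion_le_encard_mul {ι α : Type*} {S : Set ι} (hS : S.Finite) {t : ι → Set α}
    {M : ℕ∞} (ht : ∀ i ∈ S, (t i).encard ≤ M) : (⋃ i ∈ S, t i).encard ≤ S.encard * M := by
  lift S to Finset ι using hS
  calc (⋃ i ∈ S, t i).encard ≤ ∑ i ∈ S, (t i).encard := S.set_encard_biUnion_le t
    _ ≤ S.card • M := Finset.sum_le_card_nsmul _ _ _ ht
    _ = (S : Set ι).encard * M := by rw [nsmul_eq_mul, encard_coe_eq_coe_finsetCard]

lemma exists_affineSubspace_inter_preimage_finrank_lt {𝕜 V W : Type*} [DivisionRing 𝕜]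
    [AddCommGroup V] [Module 𝕜 V] [AddCommGroup W] [Module 𝕜 W] {E : AffineSubspace 𝕜 V}
    [FiniteDimensional 𝕜 E.direction] {g : V →ᵃ[𝕜] W} (hg : ¬ ∃ c, ∀ x ∈ E, g x = c)
    {z : V} (hz : z ∈ E) :
    ∃ S : AffineSubspace 𝕜 V, (S : Set V) = (E : Set V) ∩ g ⁻¹' {g z} ∧
      FiniteDimensional 𝕜 S.direction ∧ finrank 𝕜 S.direction < finrank 𝕜 E.direction := by
  let S := E ⊓ (AffineSubspace.mk' (g z) ⊥).comap g
  have hmem (x : V) : x ∈ S ↔ x ∈ E ∧ g x = g z := by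
    simp [S, AffineSubspace.mem_inf_iff, AffineSubspace.mem_mk', sub_eq_zero]
  have hlt : S < E := lt_of_le_of_ne inf_le_left fun h =>
    hg ⟨g z, fun x hx => ((hmem x).1 (h ▸ hx)).2⟩
  have hdir : S.direction < E.direction :=
    AffineSubspace.direction_lt_of_nonempty hlt ⟨z, (hmem z).2 ⟨hz, rfl⟩⟩
  exact ⟨S, ext hmem, Submodule.finiteDimensional_of_le hdir.le,
    Submodule.finrank_lt_finrank_of_lt hdir⟩

variable {𝕜 V : Type*} [Field 𝕜] [LinearOrder 𝕜] [AddCommGroup V] [Module 𝕜 V] {n : ℕ}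

/-- The cells of the values `g i x` with respect to the points `T i`. Its fibres are the cells of
the arrangement of the parallel hyperplanes `g i = t`, `t ∈ T i`. -/
def cellPattern (T : Fin n → Finset 𝕜) (g : Fin n → V →ᵃ[𝕜] 𝕜) (x : V) : Fin n → ℕ :=
  fun i => cellIndex (T i) (g i x)

lemma cellPattern_succ (T : Fin (n + 1) → Finset 𝕜) (g : Fin (n + 1) → V →ᵃ[𝕜] 𝕜) (x : V) :
    cellPattern T g x =
      Fin.cons (cellIndex (T 0) (g 0 x)) (cellPattern (Fin.tail T) (Fin.tail g) x) :=
  (Fin.cons_self_tail _).symm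

lemma encard_image_cellPattern_succ_le_of_forall_eq (T : Fin (n + 1) → Finset 𝕜)
    (g : Fin (n + 1) → V →ᵃ[𝕜] 𝕜) {E : Set V} {c : 𝕜} (hc : ∀ x ∈ E, g 0 x = c) :
    (cellPattern T g '' E).encard ≤ (cellPattern (Fin.tail T) (Fin.tail g) '' E).encard := by
  have hsub : cellPattern T g '' E ⊆
      Fin.cons (cellIndex (T 0) c) '' (cellPattern (Fin.tail T) (Fin.tail g) '' E) := by
    rintro _ ⟨x, hx, rfl⟩
    rw [cellPattern_succ, hc x hx]
    exact mem_image_of_mem _ (mem_image_of_mem _ hx)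
  exact (encard_le_encard hsub).trans (encard_image_le _ _)

variable [IsStrictOrderedRing 𝕜]

lemma convex_preimage_cellPattern (T : Fin n → Finset 𝕜) (g : Fin n → V →ᵃ[𝕜] 𝕜)
    (p : Fin n → ℕ) : Convex 𝕜 (cellPattern T g ⁻¹' {p}) := by
  have : cellPattern T g ⁻¹' {p} = ⋂ i, g i ⁻¹' (cellIndex (T i) ⁻¹' {p i}) := by
    ext x
    simp [cellPattern, funext_iff]
  rw [this]
  exact convex_iInter fun i => (ordConnected_preimage_cellIndex _ _).convex.affine_preimage (g i)

lemma exists_mem_hyperplane_of_cellIndex_lt {T : Fin (n + 1) → Finset 𝕜}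
    {g : Fin (n + 1) → V →ᵃ[𝕜] 𝕜} {E : Set V} (hE : Convex 𝕜 E) {x y : V} (hx : x ∈ E) (hy : y ∈ E)
    (htail : cellPattern (Fin.tail T) (Fin.tail g) y = cellPattern (Fin.tail T) (Fin.tail g) x)
    (hlt : cellIndex (T 0) (g 0 y) < cellIndex (T 0) (g 0 x)) :
    ∃ t ∈ T 0, cellIndex (T 0) (g 0 x) = cellIndex (T 0) t + 1 ∧
      cellPattern (Fin.tail T) (Fin.tail g) x ∈
        cellPattern (Fin.tail T) (Fin.tail g) '' (E ∩ g 0 ⁻¹' {t}) := by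
  obtain ⟨t, ht, htI, hidx⟩ := exists_mem_Ico_of_cellIndex_lt hlt
  have htseg : t ∈ g 0 '' segment 𝕜 y x := by
    rw [image_segment, segment_eq_uIcc]
    exact Icc_subset_uIcc (Ico_subset_Icc_self htI)
  obtain ⟨z, hz, rfl⟩ := htseg
  exact ⟨g 0 z, ht, hidx, z, ⟨hE.segment_subset hy hx hz, rfl⟩,
    (convex_preimage_cellPattern _ _ _).segment_subset htail rfl hz⟩

/-- Deletion–restriction: a cell of the whole arrangement is the lowest one inside a cell of the
last `n` families, or it lies just above one of the hyperplanes of the first family. -/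
lemma encard_image_cellPattern_succ_le (T : Fin (n + 1) → Finset 𝕜) (g : Fin (n + 1) → V →ᵃ[𝕜] 𝕜)
    {E : Set V} (hE : Convex 𝕜 E) {M : ℕ∞}
    (hM : ∀ t ∈ T 0, (cellPattern (Fin.tail T) (Fin.tail g) '' (E ∩ g 0 ⁻¹' {t})).encard ≤ M) :
    (cellPattern T g '' E).encard ≤
      (cellPattern (Fin.tail T) (Fin.tail g) '' E).encard + (T 0).card * M := by
  set q := cellPattern (Fin.tail T) (Fin.tail g)
  let lowest (p : Fin n → ℕ) : ℕ := sInf ((fun y => cellIndex (T 0) (g 0 y)) '' (E ∩ q ⁻¹' {p}))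
  have hsub : cellPattern T g '' E ⊆ (fun p => Fin.cons (lowest p) p) '' (q '' E) ∪
      ⋃ t ∈ (T 0 : Set 𝕜), Fin.cons (cellIndex (T 0) t + 1) '' (q '' (E ∩ g 0 ⁻¹' {t})) := by
    rintro _ ⟨x, hx, rfl⟩
    rw [cellPattern_succ]
    have hxmem := mem_image_of_mem (fun y => cellIndex (T 0) (g 0 y)) (show x ∈ E ∩ q ⁻¹' {q x}
      from ⟨hx, rfl⟩)
    obtain ⟨y, ⟨hy, hyx⟩, hlow⟩ := Nat.sInf_mem ⟨_, hxmem⟩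
    rcases (Nat.sInf_le hxmem).eq_or_lt with heq | hlt
    · rw [← show lowest (q x) = cellIndex (T 0) (g 0 x) from heq]
      exact .inl (mem_image_of_mem _ (mem_image_of_mem q hx))
    · obtain ⟨t, ht, hidx, hxt⟩ :=
        exists_mem_hyperplane_of_cellIndex_lt hE hx hy hyx (hlow.trans_lt hlt)
      exact .inr (mem_biUnion ht (hidx ▸ mem_image_of_mem _ hxt))
  calc (cellPattern T g '' E).encard
      ≤ _ := encard_le_encard hsub
    _ ≤ _ := encard_union_le _ _
    _ ≤ (q '' E).encard + (T 0 : Set 𝕜).encard * M :=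
        add_le_add (encard_image_le _ _) (encard_biUnion_le_encard_mul (T 0).finite_toSet
          fun t ht => (encard_image_le _ _).trans (hM t ht))
    _ = _ := by rw [encard_coe_eq_coe_finsetCard]

theorem encard_image_cellPattern_le {k : ℕ} (T : Fin n → Finset 𝕜) (hT : ∀ i, (T i).card ≤ k)
    (g : Fin n → V →ᵃ[𝕜] 𝕜) (E : AffineSubspace 𝕜 V) [FiniteDimensional 𝕜 E.direction] :
    (cellPattern T g '' E).encard ≤ regionBound n (finrank 𝕜 E.direction) k := by
  induction n generalizing E with
  | zero =>
    rw [regionBound_zero_left, Nat.cast_one]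
    exact encard_le_one_iff_subsingleton.2 subsingleton_of_subsingleton
  | succ n ih =>
    have ihE (S : AffineSubspace 𝕜 V) [FiniteDimensional 𝕜 S.direction] :=
      ih (Fin.tail T) (fun i => hT i.succ) (Fin.tail g) S
    by_cases hg : ∃ c, ∀ x ∈ E, g 0 x = c
    · obtain ⟨c, hc⟩ := hg
      calc (cellPattern T g '' E).encard
          ≤ _ := encard_image_cellPattern_succ_le_of_forall_eq T g hc
        _ ≤ regionBound n (finrank 𝕜 E.direction) k := ihE E
        _ ≤ regionBound (n + 1) (finrank 𝕜 E.direction) k :=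
          Nat.cast_le.2 (regionBound_mono_left _ k n.le_succ)
    · obtain ⟨z, hz⟩ : ∃ z, z ∈ E := by
        by_contra! hempty
        exact hg ⟨0, fun x hx => (hempty x hx).elim⟩
      obtain ⟨_, -, -, hpos⟩ := exists_affineSubspace_inter_preimage_finrank_lt hg hz
      obtain ⟨d, hd⟩ := Nat.exists_eq_add_one_of_ne_zero (Nat.ne_zero_of_lt hpos)
      have hsection (t : 𝕜) : (cellPattern (Fin.tail T) (Fin.tail g) '' (E ∩ g 0 ⁻¹' {t})).encard ≤
          regionBound n d k := by
        rcases (↑E ∩ g 0 ⁻¹' {t}).eq_empty_or_nonempty with hempty | ⟨z, hz, rfl⟩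
        · simp [hempty]
        · obtain ⟨S, hS, _, hlt⟩ := exists_affineSubspace_inter_preimage_finrank_lt hg hz
          rw [← hS]
          exact (ihE S).trans (Nat.cast_le.2 (regionBound_mono_right n k (by omega)))
      calc (cellPattern T g '' E).encard
          ≤ _ := encard_image_cellPattern_succ_le T g E.convex fun t _ => hsection t
        _ ≤ regionBound n (d + 1) k + k * regionBound n d k := by
          gcongr
          exacts [hd ▸ ihE E, hT 0]
        _ = regionBound (n + 1) (finrank 𝕜 E.direction) k := by
          rw [hd, regionBound_succ_succ]
          push_cast
          rfl

end Arrangement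

section Breakpoints

lemma AffineOn.mono {φ : ℝ → ℝ} {S S' : Set ℝ} (h : AffineOn φ S') (hS : S ⊆ S') :
    AffineOn φ S :=
  let ⟨m, c, hmc⟩ := h
  ⟨m, c, fun x hx => hmc x (hS hx)⟩

lemma AffineOn.closure {φ : ℝ → ℝ} {S : Set ℝ} (h : AffineOn φ S) (hφ : Continuous φ) :
    AffineOn φ (closure S) := by
  obtain ⟨m, c, hmc⟩ := h
  exact ⟨m, c, closure_minimal hmc (isClosed_eq hφ (by fun_prop))⟩

lemma exists_mem_closure_inter_Ioi {A : Finset (Set ℝ)} (hcov : ⋃ I ∈ A, closure I = univ)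
    (x : ℝ) : ∃ I ∈ A, x ∈ closure (I ∩ Ioi x) := by
  have hdense : Dense (⋃ I ∈ A, I) := by
    rw [dense_iff_closure_eq, A.closure_biUnion, hcov]
  have hx : x ∈ closure (Ioi x ∩ ⋃ I ∈ A, I) :=
    closure_minimal (hdense.open_subset_closure_inter isOpen_Ioi) isClosed_closure
      (closure_Ioi x ▸ self_mem_Ici)
  rw [inter_iUnion₂, A.closure_biUnion] at hx
  simpa [inter_comm] using hx

lemma exists_not_bddAbove_of_biUnion_closure_eq_univ {A : Finset (Set ℝ)}
    (hcov : ⋃ I ∈ A, closure I = univ) : ∃ I ∈ A, ¬ BddAbove I := by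
  by_contra! hbdd
  refine not_bddAbove_univ (α := ℝ) ?_
  rw [← hcov]
  exact A.finite_toSet.bddAbove_biUnion.2 fun I hI => (hbdd I hI).closure

lemma mem_closure_of_csSup_notMem_Ico {I : Set ℝ} (hI : I.OrdConnected) {x y : ℝ} (hxy : x ≤ y)
    (hx : x ∈ closure (I ∩ Ioi x)) (hsup : BddAbove I → sSup I ∉ Ico x y) : y ∈ closure I := by
  rcases hxy.eq_or_lt with rfl | hlt
  · exact closure_mono inter_subset_left hx
  obtain ⟨p, hpy, hpI, hxp⟩ := mem_closure_iff.1 hx (Iio y) isOpen_Iio hlt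
  by_cases hex : ∃ q ∈ I, y ≤ q
  · obtain ⟨q, hqI, hyq⟩ := hex
    exact subset_closure (hI.out hpI hqI ⟨hpy.le, hyq⟩)
  · push Not at hex
    have hbdd : BddAbove I := ⟨y, fun q hq => (hex q hq).le⟩
    have hysup : y ≤ sSup I := by
      by_contra! hsupy
      exact hsup hbdd ⟨hxp.le.trans (le_csSup hbdd hpI), hsupy⟩
    have hsupy : sSup I ≤ y := csSup_le ⟨p, hpI⟩ fun q hq => (hex q hq).le
    exact hysup.antisymm hsupy ▸ csSup_mem_closure ⟨p, hpI⟩ hbdd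

lemma exists_subset_of_forall_exists_inter_Ici_subset {ι α : Type*} [LinearOrder α] {A : Finset ι}
    (hA : A.Nonempty) {Z : Set α} {t : ι → Set α} (h : ∀ x ∈ Z, ∃ i ∈ A, Z ∩ Ici x ⊆ t i) :
    ∃ i ∈ A, Z ⊆ t i := by
  by_contra! hcon
  simp only [not_subset] at hcon
  obtain ⟨w₀, -⟩ := hcon _ hA.choose_spec
  have : Nonempty α := ⟨w₀⟩
  choose! w hwZ hwt using hcon
  obtain ⟨i₀, hi₀, hmin⟩ := A.exists_min_image w hA
  obtain ⟨i, hi, hsub⟩ := h (w i₀) (hwZ i₀ hi₀)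
  exact hwt i hi (hsub ⟨hwZ i hi, hmin i hi⟩)

/-- The right end points of the pieces serve as breakpoints; at least one piece has none. -/
lemma exists_breakpoints {φ : ℝ → ℝ} (hφ : Continuous φ) {A : Finset (Set ℝ)}
    (hconn : ∀ I ∈ A, I.OrdConnected) (hcov : ⋃ I ∈ A, closure I = univ)
    (haff : ∀ I ∈ A, AffineOn φ I) :
    ∃ T : Finset ℝ, T.card < A.card ∧ ∀ m, AffineOn φ (cellIndex T ⁻¹' {m}) := by
  classical
  obtain ⟨I₀, hI₀, hunbdd⟩ := exists_not_bddAbove_of_biUnion_closure_eq_univ hcov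
  refine ⟨(A.filter BddAbove).image sSup, ?_, fun m => ?_⟩
  · exact Finset.card_image_le.trans_lt
      (Finset.card_lt_card (Finset.filter_ssubset.2 ⟨I₀, hI₀, hunbdd⟩))
  · set T := (A.filter BddAbove).image sSup
    obtain ⟨I, hI, hsub⟩ : ∃ I ∈ A, cellIndex T ⁻¹' {m} ⊆ closure I := by
      refine exists_subset_of_forall_exists_inter_Ici_subset ⟨I₀, hI₀⟩ fun x hx => ?_
      obtain ⟨I, hI, hxI⟩ := exists_mem_closure_inter_Ioi hcov x
      refine ⟨I, hI, fun y ⟨hy, hxy⟩ =>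
        mem_closure_of_csSup_notMem_Ico (hconn I hI) hxy hxI fun hbdd hmem => ?_⟩
      have hsup : sSup I ∈ T := Finset.mem_image_of_mem _ (Finset.mem_filter.2 ⟨hI, hbdd⟩)
      exact (cellIndex_lt_of_mem_Ico hsup hmem).ne (hx.trans hy.symm)
    exact ((haff I hI).closure hφ).mono hsub

end Breakpoints

section AffinePieces

variable {E F G : Type*} [AddCommGroup E] [Module ℝ E] [AddCommGroup F] [Module ℝ F]
  [AddCommGroup G] [Module ℝ G] {f : E → F} {r s N : ℕ} {C : Set E}

/-- `C` is a convex set on which `f` coincides with an affine map of rank at most `r`. -/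
def IsAffinePiece (f : E → F) (r : ℕ) (C : Set E) : Prop :=
  Convex ℝ C ∧ ∃ a : E →ᵃ[ℝ] F, finrank ℝ a.linear.range ≤ r ∧ EqOn f a C

/-- `f` is piecewise affine with at most `N` pieces, each of rank at most `r`. The pieces cover the
space but may overlap. -/
def HasAffinePieces (f : E → F) (r N : ℕ) : Prop :=
  ∃ S : Set (Set E), S.encard ≤ N ∧ ⋃₀ S = univ ∧ ∀ C ∈ S, IsAffinePiece f r C

lemma IsAffinePiece.affine_comp [FiniteDimensional ℝ F] (hf : IsAffinePiece f r C)
    (b : F →ᵃ[ℝ] G) : IsAffinePiece (b ∘ f) (min r (finrank ℝ b.linear.range)) C := by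
  obtain ⟨hC, a, ha, hfa⟩ := hf
  refine ⟨hC, b.comp a, le_min ?_ ?_, fun x hx => congrArg b (hfa hx)⟩
  · rw [AffineMap.comp_linear, LinearMap.range_comp]
    exact (Submodule.finrank_map_le _ _).trans ha
  · exact Submodule.finrank_mono (LinearMap.range_comp_le_range a.linear b.linear)

lemma IsAffinePiece.convex_fixedPoints_inter {f : E → E} (hf : IsAffinePiece f r C) :
    Convex ℝ (Function.fixedPoints f ∩ C) := by
  obtain ⟨hC, a, -, hfa⟩ := hf
  intro x ⟨hx, hxC⟩ y ⟨hy, hyC⟩ α β hα hβ hαβ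
  have hmem := hC hxC hyC hα hβ hαβ
  refine ⟨?_, hmem⟩
  calc f (α • x + β • y) = α • f x + β • f y := by
        rw [hfa hmem, hfa hxC, hfa hyC, Convex.combo_affine_apply hαβ]
    _ = α • x + β • y := by rw [hx.eq, hy.eq]

lemma hasAffinePieces_id : HasAffinePieces (id : E → E) (finrank ℝ E) 1 :=
  ⟨{univ}, by simp, by simp, by
    rintro _ rfl
    refine ⟨convex_univ, AffineMap.id ℝ E, ?_, fun _ _ => rfl⟩
    rw [AffineMap.id_linear, LinearMap.range_id, finrank_top]⟩

lemma HasAffinePieces.affine_comp [FiniteDimensional ℝ F] (hf : HasAffinePieces f r N)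
    (b : F →ᵃ[ℝ] G) : HasAffinePieces (b ∘ f) (min r (finrank ℝ b.linear.range)) N :=
  let ⟨S, hcard, hcov, hS⟩ := hf
  ⟨S, hcard, hcov, fun C hC => (hS C hC).affine_comp b⟩

lemma HasAffinePieces.refine {g : E → G} {M : ℕ} (hf : HasAffinePieces f r N)
    (h : ∀ C, IsAffinePiece f r C →
      ∃ D : Set (Set E), D.encard ≤ M ∧ C ⊆ ⋃₀ D ∧ ∀ C' ∈ D, IsAffinePiece g s C') :
    HasAffinePieces g s (N * M) := by
  obtain ⟨S, hcard, hcov, hS⟩ := hf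
  choose! D hDcard hDcov hD using h
  refine ⟨⋃ C ∈ S, D C, ?_, ?_, ?_⟩
  · calc (⋃ C ∈ S, D C).encard
        ≤ S.encard * M := encard_biUnion_le_encard_mul (finite_of_encard_le_coe hcard)
          fun C hC => hDcard C (hS C hC)
      _ ≤ (N * M : ℕ) := by
        push_cast
        gcongr
  · refine eq_univ_of_forall fun x => ?_
    obtain ⟨C, hC, hxC⟩ := mem_sUnion.1 (hcov ▸ mem_univ x)
    obtain ⟨C', hC', hxC'⟩ := hDcov C (hS C hC) hxC
    exact ⟨C', mem_biUnion hC hC', hxC'⟩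
  · intro C' hC'
    obtain ⟨C, hC, hC'⟩ := mem_iUnion₂.1 hC'
    exact hD C (hS C hC) C' hC'

end AffinePieces

section Activation

variable {E : Type*} [AddCommGroup E] [Module ℝ E] {n r N k : ℕ} {f : E → Fin n → ℝ}
  {φ : Fin n → ℝ → ℝ} {T : Fin n → Finset ℝ}

lemma exists_affineMap_eqOn_preimage_cellPattern
    (hφ : ∀ i m, AffineOn (φ i) (cellIndex (T i) ⁻¹' {m})) (p : Fin n → ℕ) :
    ∃ b : (Fin n → ℝ) →ᵃ[ℝ] (Fin n → ℝ),
      EqOn (fun y i => φ i (y i)) b (cellPattern T AffineMap.proj ⁻¹' {p}) := by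
  choose m c hmc using hφ
  refine ⟨AffineMap.pi fun i => m i (p i) • AffineMap.proj i + AffineMap.const ℝ _ (c i (p i)),
    fun y hy => funext fun i => ?_⟩
  simpa using hmc i (p i) (y i) (congrFun hy i)

lemma IsAffinePiece.exists_activation_pieces (hT : ∀ i, (T i).card ≤ k)
    (hφ : ∀ i m, AffineOn (φ i) (cellIndex (T i) ⁻¹' {m})) {C : Set E}
    (hf : IsAffinePiece f r C) :
    ∃ D : Set (Set E), D.encard ≤ regionBound n r k ∧ C ⊆ ⋃₀ D ∧
      ∀ C' ∈ D, IsAffinePiece (fun x i => φ i (f x i)) r C' := by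
  obtain ⟨hC, a, ha, hfa⟩ := hf
  let q : (Fin n → ℝ) → Fin n → ℕ := cellPattern T AffineMap.proj
  refine ⟨(fun p => C ∩ a ⁻¹' (q ⁻¹' {p})) '' (q '' (AffineSubspace.map a ⊤)), ?_, ?_, ?_⟩
  · have hrank : finrank ℝ (AffineSubspace.map a ⊤).direction ≤ r := by
      rwa [AffineSubspace.map_direction, AffineSubspace.direction_top, Submodule.map_top]
    calc _ ≤ (q '' (AffineSubspace.map a ⊤)).encard := encard_image_le _ _
      _ ≤ _ := encard_image_cellPattern_le T hT _ _
      _ ≤ regionBound n r k := Nat.cast_le.2 (regionBound_mono_right n k hrank)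
  · exact fun x hx => ⟨_, mem_image_of_mem _ (mem_image_of_mem q ⟨x, mem_univ x, rfl⟩), hx, rfl⟩
  · rintro _ ⟨p, -, rfl⟩
    obtain ⟨b, hb⟩ := exists_affineMap_eqOn_preimage_cellPattern hφ p
    have hpiece : IsAffinePiece f r (C ∩ a ⁻¹' (q ⁻¹' {p})) :=
      ⟨hC.inter ((convex_preimage_cellPattern _ _ p).affine_preimage a), a, ha,
        hfa.mono inter_subset_left⟩
    obtain ⟨hconv, a', ha', hfa'⟩ := hpiece.affine_comp b
    refine ⟨hconv, a', ha'.trans (min_le_left _ _), fun x hx => ?_⟩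
    calc (fun i => φ i (f x i)) = b (f x) := hb (hfa hx.1 ▸ hx.2)
      _ = a' x := hfa' hx

lemma HasAffinePieces.activation (hT : ∀ i, (T i).card ≤ k)
    (hφ : ∀ i m, AffineOn (φ i) (cellIndex (T i) ⁻¹' {m})) (hf : HasAffinePieces f r N) :
    HasAffinePieces (fun x i => φ i (f x i)) r (N * regionBound n r k) :=
  hf.refine fun _ hC => hC.exists_activation_pieces hT hφ

end Activation

section Components

variable {X : Type*} [TopologicalSpace X]

lemma encard_connectedComponentIn_le {F : Set X} {S : Set (Set X)} (hcov : F ⊆ ⋃₀ S)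
    (hS : ∀ C ∈ S, IsPreconnected (F ∩ C)) :
    {K | ∃ x ∈ F, K = connectedComponentIn F x}.encard ≤ S.encard := by
  have hpiece (K) (hK : K ∈ {K | ∃ x ∈ F, K = connectedComponentIn F x}) :
      ∃ C ∈ S, ∃ x ∈ F ∩ C, K = connectedComponentIn F x := by
    obtain ⟨x, hx, rfl⟩ := hK
    obtain ⟨C, hC, hxC⟩ := hcov hx
    exact ⟨C, hC, x, ⟨hx, hxC⟩, rfl⟩
  choose! c hcS x hxc hKx using hpiece
  refine encard_le_encard_of_injOn hcS fun K hK K' hK' heq => ?_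
  rw [hKx K hK, hKx K' hK']
  exact connectedComponentIn_eq ((hS _ (hcS K hK)).subset_connectedComponentIn (hxc K hK)
    inter_subset_left (heq ▸ hxc K' hK'))

lemma HasAffinePieces.encard_connectedComponentIn_fixedPoints_le {E : Type*} [AddCommGroup E]
    [Module ℝ E] [TopologicalSpace E] [IsTopologicalAddGroup E] [ContinuousSMul ℝ E] {f : E → E}
    {r N : ℕ} (hf : HasAffinePieces f r N) :
    {K | ∃ x ∈ Function.fixedPoints f,
      K = connectedComponentIn (Function.fixedPoints f) x}.encard ≤ N := by
  obtain ⟨S, hcard, hcov, hS⟩ := hf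
  exact (encard_connectedComponentIn_le (hcov ▸ subset_univ _) fun C hC =>
    (hS C hC).convex_fixedPoints_inter.isPreconnected).trans hcard

end Components

section Network

variable {φ : ℝ → ℝ} {T : Finset ℝ} {k : ℕ} {nsz : ℕ → ℕ}
  (W : ∀ j : ℕ, Matrix (Fin (nsz (j + 1))) (Fin (nsz j)) ℝ)
  (u : ∀ j : ℕ, Fin (nsz (j + 1)) → ℝ)

/-- The minimum of the input dimension and the ranks of the first `l` weight matrices. For `l ≥ 1`
it is the number `d_l` of the paper. -/
def minRank : ℕ → ℕ
  | 0 => nsz 0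
  | l + 1 => min (minRank l) (W l).rank

lemma minRank_succ_eq_inf' (l : ℕ) :
    minRank W (l + 1) =
      (Finset.range (l + 1)).inf' Finset.nonempty_range_add_one fun j => (W j).rank := by
  induction l with
  | zero => simp [minRank, (W 0).rank_le_width]
  | succ l ih =>
    rw [Finset.inf'_congr _ (Finset.range_add_one (n := l + 1)) fun _ _ => rfl,
      Finset.inf'_insert Finset.nonempty_range_add_one, ← ih, inf_comm, minRank]

lemma hasAffinePieces_layerOut (hT : T.card ≤ k) (hφ : ∀ m, AffineOn φ (cellIndex T ⁻¹' {m}))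
    (l : ℕ) :
    HasAffinePieces (layerOut φ nsz W u l) (minRank W l)
      (∏ ν ∈ Finset.range l, regionBound (nsz (ν + 1)) (minRank W (ν + 1)) k) := by
  induction l with
  | zero => simpa [minRank] using! hasAffinePieces_id (E := Fin (nsz 0) → ℝ)
  | succ l ih =>
    let b := (W l).mulVecLin.toAffineMap + AffineMap.const ℝ _ (u l)
    have hb : b.linear = (W l).mulVecLin := by simp [b]
    have hpre : HasAffinePieces (b ∘ layerOut φ nsz W u l) (minRank W (l + 1)) _ :=
      hb ▸ ih.affine_comp b
    rw [Finset.prod_range_succ]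
    exact hpre.activation (fun _ => hT) fun _ => hφ

/-- In contrast to `Set.ncard`, which is `0` on infinite sets, the bound on `Set.encard` includes
the finiteness of the set of components. -/
theorem card_components_fixedPoints_le_general (hφ : Continuous φ) {A : Finset (Set ℝ)}
    (hconn : ∀ I ∈ A, I.OrdConnected) (hcov : ⋃ I ∈ A, closure I = univ)
    (haff : ∀ I ∈ A, AffineOn φ I) (hcard : A.card ≤ k + 1) (L : ℕ) (hio : nsz 0 = nsz L) :
    {C : Set (Fin (nsz 0) → ℝ) | ∃ x ∈ {y | netFun φ nsz W u L hio y = y},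
        C = connectedComponentIn {y | netFun φ nsz W u L hio y = y} x}.encard ≤
      (∏ ν ∈ Finset.range L,
        regionBound (nsz (ν + 1)) (Finset.inf' (Finset.range (ν + 1)) Finset.nonempty_range_add_one
          fun j => (W j).rank) k : ℕ) := by
  obtain ⟨T, hTcard, hTφ⟩ := exists_breakpoints hφ hconn hcov haff
  have hlayers := hasAffinePieces_layerOut W u (Nat.le_of_lt_succ (hTcard.trans_le hcard)) hTφ L
  have hnet := hlayers.affine_comp (LinearMap.funLeft ℝ ℝ (Fin.cast hio)).toAffineMap
  simp only [minRank_succ_eq_inf'] at hnet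
  exact hnet.encard_connectedComponentIn_fixedPoints_le

end Network

/-- The set of fixed points of a multi-layer network with a PWL activation
with `k+1` pieces has at most `∏_{ν=1}^{L} F(d_ν, n_ν, k)` connected components, where
`d_ν = min{rank W_j : j ≤ ν}`. -/
theorem card_components_fixedPoints_le
    (φ : ℝ → ℝ) (Aφ : Finset (Set ℝ)) (k : ℕ) (hk : 1 ≤ k)
    (hφ : IsPWLWith φ Aφ) (hcard : Aφ.card = k + 1)
    (L : ℕ) (hL : 1 ≤ L) (nsz : ℕ → ℕ)
    (W : ∀ j : ℕ, Matrix (Fin (nsz (j + 1))) (Fin (nsz j)) ℝ)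
    (u : ∀ j : ℕ, Fin (nsz (j + 1)) → ℝ) (hio : nsz 0 = nsz L) :
    {C : Set (Fin (nsz 0) → ℝ) | ∃ x ∈ {y | netFun φ nsz W u L hio y = y},
        C = connectedComponentIn {y | netFun φ nsz W u L hio y = y} x}.ncard ≤
      ∏ ν ∈ Finset.range L,
        Fbound (Finset.inf' (Finset.range (ν + 1)) Finset.nonempty_range_add_one
          fun j => (W j).rank) (nsz (ν + 1)) k :=
  (ENat.toNat_le_of_le_natCast (card_components_fixedPoints_le_general W u hφ.cont hφ.ordConn
    hφ.covers hφ.affine hcard.le L hio)).trans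
    (Finset.prod_le_prod' fun _ _ => regionBound_le_Fbound _ _ k)

end
end
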